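/- arXiv:1709.00524 — 3 statements merged into one kernel-verified Lean document; each statement's English description precedes it below -/
import Mathlib

section
/- For every real number x, in the ring of formal power series in one variable y over the real quaternions ℍ, the generating function of the Tribonacci-Lucas quaternion polynomials satisfies (1 - x²y - xy² - y³) · ∑_{n≥0} Q_{t,n}(x) yⁿ = (3 - 2x²y - xy²) + (x² + 2xy + 3y²)·i + (x⁴ + 2x + x³y + 3y + x²y²)·j + (x⁶ + 3x³ + 3 + x⁵y + 3x²y + x⁴y² + 2xy²)·k. -/
/-- Tribonacci-Lucas polynomials: t₀=3, t₁=x², t₂=x⁴+2x, tₙ₊₃ = x²tₙ₊₂ + xtₙ₊₁ + tₙ. -/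
def TribL (x : ℝ) : ℕ → ℝ
  | 0 => 3
  | 1 => x ^ 2
  | 2 => x ^ 4 + 2 * x
  | n + 3 => x ^ 2 * TribL x (n + 2) + x * TribL x (n + 1) + TribL x n

/-- Tribonacci-Lucas quaternion polynomials Q_{t,n}(x). -/
noncomputable def Qt (x : ℝ) (n : ℕ) : Quaternion ℝ :=
  ⟨TribL x n, TribL x (n + 1), TribL x (n + 2), TribL x (n + 3)⟩

/-- The quaternionic units i, j, k. -/
def qi : Quaternion ℝ := ⟨0, 1, 0, 0⟩
def qj : Quaternion ℝ := ⟨0, 0, 1, 0⟩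
def qk : Quaternion ℝ := ⟨0, 0, 0, 1⟩

open PowerSeries in
/-- generating function of the Tribonacci-Lucas quaternion polynomials. -/
theorem tribonacci_lucas_quaternion_generating_function (x : ℝ) :
    (1 - C (R := Quaternion ℝ) ((x ^ 2 : ℝ) : Quaternion ℝ) * X
        - C (R := Quaternion ℝ) ((x : ℝ) : Quaternion ℝ) * X ^ 2 - X ^ 3)
        * PowerSeries.mk (fun n => Qt x n)
      = (3 - C (R := Quaternion ℝ) ((2 * x ^ 2 : ℝ) : Quaternion ℝ) * X
            - C (R := Quaternion ℝ) ((x : ℝ) : Quaternion ℝ) * X ^ 2)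
        + (C (R := Quaternion ℝ) ((x ^ 2 : ℝ) : Quaternion ℝ)
            + C (R := Quaternion ℝ) ((2 * x : ℝ) : Quaternion ℝ) * X + 3 * X ^ 2)
            * C (R := Quaternion ℝ) qi
        + (C (R := Quaternion ℝ) ((x ^ 4 + 2 * x : ℝ) : Quaternion ℝ)
            + (C (R := Quaternion ℝ) ((x ^ 3 : ℝ) : Quaternion ℝ) + 3) * X
            + C (R := Quaternion ℝ) ((x ^ 2 : ℝ) : Quaternion ℝ) * X ^ 2)
            * C (R := Quaternion ℝ) qj
        + (C (R := Quaternion ℝ) ((x ^ 6 + 3 * x ^ 3 + 3 : ℝ) : Quaternion ℝ)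
            + C (R := Quaternion ℝ) ((x ^ 5 + 3 * x ^ 2 : ℝ) : Quaternion ℝ) * X
            + C (R := Quaternion ℝ) ((x ^ 4 + 2 * x : ℝ) : Quaternion ℝ) * X ^ 2)
            * C (R := Quaternion ℝ) qk := by
  have h3 : (3 : PowerSeries (Quaternion ℝ)) = C (R := Quaternion ℝ) ((3 : ℝ) : Quaternion ℝ) := by
    have : ((3 : ℝ) : Quaternion ℝ) = 3 := by norm_cast
    rw [this, map_ofNat]
  have hX : (X : PowerSeries (Quaternion ℝ)) = X ^ 1 := (pow_one _).symm
  rw [h3, hX, ← pow_mul, ← pow_mul]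
  simp only [add_mul, sub_mul, one_mul, mul_assoc]
  ext1 n
  simp only [map_add, map_sub, coeff_C_mul, coeff_X_pow_mul', coeff_X_pow, coeff_C, coeff_mk]
  have hre (n : ℕ) : (Qt x n).re = TribL x n := rfl
  have hI (n : ℕ) : (Qt x n).imI = TribL x (n + 1) := rfl
  have hJ (n : ℕ) : (Qt x n).imJ = TribL x (n + 2) := rfl
  have hK (n : ℕ) : (Qt x n).imK = TribL x (n + 3) := rfl
  have i1 : qi.re = 0 := rfl
  have i2 : qi.imI = 1 := rfl
  have i3 : qi.imJ = 0 := rfl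
  have i4 : qi.imK = 0 := rfl
  have j1 : qj.re = 0 := rfl
  have j2 : qj.imI = 0 := rfl
  have j3 : qj.imJ = 1 := rfl
  have j4 : qj.imK = 0 := rfl
  have k1 : qk.re = 0 := rfl
  have k2 : qk.imI = 0 := rfl
  have k3 : qk.imJ = 0 := rfl
  have k4 : qk.imK = 1 := rfl
  rcases n with _ | _ | _ | n
  · ext <;> simp [Quaternion.coe_mul_eq_smul, hre, hI, hJ, hK, i1, i2, i3, i4, j1, j2, j3, j4, k1, k2, k3, k4, TribL, -Quaternion.coe_pow, -Quaternion.coe_mul, -Quaternion.coe_add] <;> ring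
  · ext <;> simp [Quaternion.coe_mul_eq_smul, hre, hI, hJ, hK, i1, i2, i3, i4, j1, j2, j3, j4, k1, k2, k3, k4, TribL, -Quaternion.coe_pow, -Quaternion.coe_mul, -Quaternion.coe_add] <;> ring
  · ext <;> simp [Quaternion.coe_mul_eq_smul, hre, hI, hJ, hK, i1, i2, i3, i4, j1, j2, j3, j4, k1, k2, k3, k4, TribL, -Quaternion.coe_pow, -Quaternion.coe_mul, -Quaternion.coe_add] <;> ring
  · have e1 : n + 3 - 1 = n + 2 := by omega
    have e2 : n + 3 - 2 = n + 1 := by omega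
    have e3 : n + 3 - 3 = n := by omega
    ext <;> simp [Quaternion.coe_mul_eq_smul, hre, hI, hJ, hK, i1, i2, i3, i4, j1, j2, j3, j4, k1, k2, k3, k4, TribL, -Quaternion.coe_pow, -Quaternion.coe_mul, -Quaternion.coe_add, e1, e2, e3] <;> ring_nf <;> rfl
end

section
/- For every real number x and every natural number m ≥ 2, in the ring of formal power series in one variable y over the real quaternions ℍ, the generating function of the shifted Tribonacci quaternion polynomials satisfies (1 - x²y - xy² - y³) · ∑_{n≥0} Q_{T,n+m}(x) yⁿ = Q_{T,m}(x) + (x·Q_{T,m-1}(x) + Q_{T,m-2}(x))·y + Q_{T,m-1}(x)·y². -/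
/-- Tribonacci polynomials: T₀=0, T₁=1, T₂=x², Tₙ₊₃ = x²Tₙ₊₂ + xTₙ₊₁ + Tₙ. -/
def Trib (x : ℝ) : ℕ → ℝ
  | 0 => 0
  | 1 => 1
  | 2 => x ^ 2
  | n + 3 => x ^ 2 * Trib x (n + 2) + x * Trib x (n + 1) + Trib x n

/-- Tribonacci quaternion polynomials Q_{T,n}(x). -/
noncomputable def QT (x : ℝ) (n : ℕ) : Quaternion ℝ :=
  ⟨Trib x n, Trib x (n + 1), Trib x (n + 2), Trib x (n + 3)⟩

theorem QT_rec (x : ℝ) (n : ℕ) :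
    QT x (n + 3) = ((x ^ 2 : ℝ) : Quaternion ℝ) * QT x (n + 2)
      + ((x : ℝ) : Quaternion ℝ) * QT x (n + 1) + QT x n := by
  rw [Quaternion.coe_mul_eq_smul, Quaternion.coe_mul_eq_smul]
  ext <;> simp only [Quaternion.re_add, Quaternion.imI_add, Quaternion.imJ_add,
    Quaternion.imK_add, Quaternion.re_smul, Quaternion.imI_smul, Quaternion.imJ_smul,
    Quaternion.imK_smul, smul_eq_mul]
  · exact Trib.eq_4 x n
  · exact Trib.eq_4 x (n + 1)
  · exact Trib.eq_4 x (n + 2)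
  · exact Trib.eq_4 x (n + 3)

open PowerSeries in
/-- generating function of the shifted Tribonacci quaternion polynomials. -/
theorem tribonacci_quaternion_shifted_generating_function (x : ℝ) (m : ℕ) (hm : 2 ≤ m) :
    (1 - C (R := Quaternion ℝ) ((x ^ 2 : ℝ) : Quaternion ℝ) * X
        - C (R := Quaternion ℝ) ((x : ℝ) : Quaternion ℝ) * X ^ 2 - X ^ 3)
        * PowerSeries.mk (fun n => QT x (n + m))
      = C (R := Quaternion ℝ) (QT x m)
        + C (R := Quaternion ℝ) (x • QT x (m - 1) + QT x (m - 2)) * X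
        + C (R := Quaternion ℝ) (QT x (m - 1)) * X ^ 2 := by
  obtain ⟨k, rfl⟩ := Nat.exists_eq_add_of_le' hm
  have e1 : k + 2 - 1 = k + 1 := by omega
  have e2 : k + 2 - 2 = k := by omega
  rw [e1, e2, ← Quaternion.coe_mul_eq_smul]
  simp only [sub_mul, one_mul, mul_assoc]
  ext1 n
  rcases n with _ | _ | _ | n
  · simp [coeff_X_pow_mul', coeff_X_pow]
  · have h := QT_rec x k
    have e : 0 + 1 + (k + 2) = k + 3 := by omega
    simp only [map_sub, map_add, coeff_C_mul, coeff_mk, coeff_X_pow_mul', coeff_X_pow,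
      coeff_succ_X_mul, coeff_C, coeff_X, e, h]
    simp
    abel
  · have h := QT_rec x (k + 1)
    have e : 0 + 1 + 1 + (k + 2) = k + 1 + 3 := by omega
    have e' : 0 + 1 + (k + 2) = k + 1 + 2 := by omega
    simp only [map_sub, map_add, coeff_C_mul, coeff_mk, coeff_X_pow_mul', coeff_X_pow,
      coeff_succ_X_mul, coeff_C, coeff_X, e, e', h]
    simp
    abel
  · have h := QT_rec x (n + (k + 2))
    have e : n + 1 + 1 + 1 + (k + 2) = n + (k + 2) + 3 := by omega
    have e' : n + 1 + 1 + (k + 2) = n + (k + 2) + 2 := by omega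
    have e3 : n + 1 + 1 + 1 - 2 + (k + 2) = n + (k + 2) + 1 := by omega
    have e4 : n + 1 + 1 + 1 - 3 + (k + 2) = n + (k + 2) := by omega
    have l2 : 2 ≤ n + 1 + 1 + 1 := by omega
    have l3 : 3 ≤ n + 1 + 1 + 1 := by omega
    simp only [map_sub, map_add, coeff_C_mul, coeff_mk, coeff_X_pow_mul', coeff_X_pow,
      coeff_succ_X_mul, coeff_C, coeff_X, e, e', e3, e4, h, l2, l3, if_true]
    simp
    abel
end

section
/- For every real number x and every natural number m ≥ 2, in the ring of formal power series in one variable y over the real quaternions ℍ, the generating function of the shifted Tribonacci-Lucas quaternion polynomials satisfies (1 - x²y - xy² - y³) · ∑_{n≥0} Q_{t,n+m}(x) yⁿ = Q_{t,m}(x) + (x·Q_{t,m-1}(x) + Q_{t,m-2}(x))·y + Q_{t,m-1}(x)·y². -/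
theorem Qt_rec (x : ℝ) (n : ℕ) :
    Qt x (n + 3) = ((x ^ 2 : ℝ) : Quaternion ℝ) * Qt x (n + 2)
      + ((x : ℝ) : Quaternion ℝ) * Qt x (n + 1) + Qt x n := by
  have h : ∀ k, TribL x (k + 3) = x ^ 2 * TribL x (k + 2) + x * TribL x (k + 1) + TribL x k :=
    fun k => by rw [TribL]
  rw [Quaternion.coe_mul_eq_smul, Quaternion.coe_mul_eq_smul]
  ext
  · exact h n
  · exact h (n + 1)
  · exact h (n + 2)
  · exact h (n + 3)

open PowerSeries in
/-- generating function of the shifted Tribonacci-Lucas quaternion polynomials. -/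
theorem tribonacci_lucas_quaternion_shifted_generating_function (x : ℝ) (m : ℕ) (hm : 2 ≤ m) :
    (1 - C (R := Quaternion ℝ) ((x ^ 2 : ℝ) : Quaternion ℝ) * X
        - C (R := Quaternion ℝ) ((x : ℝ) : Quaternion ℝ) * X ^ 2 - X ^ 3)
        * PowerSeries.mk (fun n => Qt x (n + m))
      = C (R := Quaternion ℝ) (Qt x m)
        + C (R := Quaternion ℝ) (x • Qt x (m - 1) + Qt x (m - 2)) * X
        + C (R := Quaternion ℝ) (Qt x (m - 1)) * X ^ 2 := by
  obtain ⟨k, rfl⟩ : ∃ k, m = k + 2 := ⟨m - 2, by omega⟩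
  have e1 : k + 2 - 1 = k + 1 := by omega
  have e2 : k + 2 - 2 = k := by omega
  rw [e1, e2, ← Quaternion.coe_mul_eq_smul]
  have hX : (X : PowerSeries (Quaternion ℝ)) = X ^ 1 := (pow_one X).symm
  ext1 n
  rw [sub_mul, sub_mul, sub_mul, one_mul, mul_assoc, mul_assoc]
  rw [hX]
  simp only [← pow_mul, one_mul, add_mul, map_sub, map_add, coeff_C_mul, coeff_X_pow_mul', coeff_mk,
    coeff_X_pow, coeff_C]
  match n with
  | 0 => simp
  | 1 =>
    have h := Qt_rec x k
    have e : 1 + (k + 2) = k + 3 := by omega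
    simp [e, h]
    abel
  | 2 =>
    have h := Qt_rec x (k + 1)
    have e : 2 + (k + 2) = k + 1 + 3 := by omega
    have e' : 1 + (k + 2) = k + 1 + 2 := by omega
    have e'' : k + 1 + 1 = k + 2 := by omega
    simp only [e'', e'] at h ⊢
    simp [e, h]
    abel
  | j + 3 =>
    have h := Qt_rec x (j + (k + 2))
    have a0 : j + 3 + (k + 2) = j + (k + 2) + 3 := by omega
    have a1 : j + 3 - 1 + (k + 2) = j + (k + 2) + 2 := by omega
    have a2 : j + 3 - 2 + (k + 2) = j + (k + 2) + 1 := by omega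
    have a3 : j + 3 - 3 + (k + 2) = j + (k + 2) := by omega
    rw [a0, a1, a2, a3, h, if_pos (by omega), if_pos (by omega), if_pos (by omega),
      if_neg (by omega), if_neg (by omega), if_neg (by omega)]
    simp only [mul_zero, add_zero]
    abel
end
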